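/- Let (S,d) be a complete separable metric space and, for ρ > 0, let M = {μ ∈ M(S) : ‖μ‖_TV = ρ} be the total variation sphere of radius ρ. Then the restriction to M of the σ(M(S), BL(S))-weak topology coincides with the restriction to M of the topology induced by the norm ‖·‖*_BL. -/

import Mathlib

open MeasureTheory Filter Topology

/-- A function is bounded Lipschitz. -/
def IsBL {S : Type*} [PseudoMetricSpace S] (f : S → ℝ) : Prop :=
  (∃ C : ℝ, ∀ x, |f x| ≤ C) ∧ ∃ K : NNReal, LipschitzWith K f

/-- Pairing of a finite signed Borel measure with a function, via the Jordan decomposition. -/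
noncomputable def pairing {S : Type*} [MeasurableSpace S] (μ : SignedMeasure S) (f : S → ℝ) : ℝ :=
  (∫ x, f x ∂μ.toJordanDecomposition.posPart) - ∫ x, f x ∂μ.toJordanDecomposition.negPart

/-- Total variation norm of a finite signed measure. -/
noncomputable def tvNorm {S : Type*} [MeasurableSpace S] (μ : SignedMeasure S) : ℝ :=
  (μ.totalVariation Set.univ).toReal

/-- Dual bounded Lipschitz norm on signed measures. -/
noncomputable def blDualNorm {S : Type*} [PseudoMetricSpace S] [MeasurableSpace S]
    (μ : SignedMeasure S) : ℝ :=
  sSup {r : ℝ | ∃ (f : S → ℝ) (C : ℝ) (K : NNReal), (∀ x, |f x| ≤ C) ∧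
    LipschitzWith K f ∧ C + (K : ℝ) ≤ 1 ∧ r = |pairing μ f|}

/-- The `σ(M(S), BL(S))`-weak topology on `M(S)`: the coarsest topology making
`μ ↦ ⟨μ, f⟩` continuous for every bounded Lipschitz `f`. -/
noncomputable def weakTop (S : Type*) [PseudoMetricSpace S] [MeasurableSpace S] :
    TopologicalSpace (SignedMeasure S) :=
  ⨅ f : {g : S → ℝ // IsBL g},
    TopologicalSpace.induced (fun μ : SignedMeasure S => pairing μ f.1) inferInstance

/-- The topology on `M(S)` induced by the norm `‖·‖*_BL`, generated by the open balls. -/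
noncomputable def normTop (S : Type*) [PseudoMetricSpace S] [MeasurableSpace S] :
    TopologicalSpace (SignedMeasure S) :=
  TopologicalSpace.generateFrom
    {B | ∃ (μ : SignedMeasure S) (ε : ℝ), 0 < ε ∧ B = {ν | blDualNorm (ν - μ) < ε}}



theorem aux_int {S : Type*} [MeasurableSpace S] (p : Measure S) [IsFiniteMeasure p]
    {f : S → ℝ} (hf : Integrable f p) {A : Set S} (hA : MeasurableSet A) (a b : ℝ)
    (h1 : ∀ x ∈ A, f x ≤ a + b) (h2 : ∀ x, x ∉ A → f x ≤ a) :
    ∫ x, f x ∂p ≤ a * p.real Set.univ + b * p.real A := by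
  have hi : Integrable (A.indicator (fun _ => b)) p := (integrable_const b).indicator hA
  calc ∫ x, f x ∂p ≤ ∫ x, (a + A.indicator (fun _ => b) x) ∂p := by
        refine integral_mono hf ((integrable_const a).add hi) (fun x => ?_)
        by_cases hx : x ∈ A
        · simpa [hx] using h1 x hx
        · simpa [hx] using h2 x hx
    _ = a * p.real Set.univ + b * p.real A := by
        rw [integral_add (integrable_const a) hi, integral_indicator_const _ hA]
        simp [mul_comm]

theorem aux_integrable {S : Type*} [PseudoMetricSpace S] [MeasurableSpace S] [BorelSpace S]
    (p : Measure S) [IsFiniteMeasure p] {f : S → ℝ} (hf : IsBL f) : Integrable f p := by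
  obtain ⟨⟨C, hC⟩, K, hK⟩ := hf
  exact Integrable.of_bound hK.continuous.measurable.aestronglyMeasurable C
    (Eventually.of_forall hC)

theorem IsBL.sub' {S : Type*} [PseudoMetricSpace S] {f g : S → ℝ} (hf : IsBL f) (hg : IsBL g) :
    IsBL (fun x => f x - g x) := by
  obtain ⟨⟨C, hC⟩, K, hK⟩ := hf
  obtain ⟨⟨C', hC'⟩, K', hK'⟩ := hg
  refine ⟨⟨C + C', fun x => (abs_sub _ _).trans (add_le_add (hC x) (hC' x))⟩, K + K', hK.sub hK'⟩

theorem pairing_sub_fun {S : Type*} [PseudoMetricSpace S] [MeasurableSpace S] [BorelSpace S]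
    (μ : SignedMeasure S) {f g : S → ℝ} (hf : IsBL f) (hg : IsBL g) :
    pairing μ (fun x => f x - g x) = pairing μ f - pairing μ g := by
  unfold pairing
  rw [integral_sub (aux_integrable _ hf) (aux_integrable _ hg),
    integral_sub (aux_integrable _ hf) (aux_integrable _ hg)]
  ring

theorem pairing_mul {S : Type*} [MeasurableSpace S] (μ : SignedMeasure S) (c : ℝ) (f : S → ℝ) :
    pairing μ (fun x => c * f x) = c * pairing μ f := by
  unfold pairing
  rw [integral_const_mul, integral_const_mul]
  ring

theorem pairing_sub {S : Type*} [PseudoMetricSpace S] [MeasurableSpace S] [BorelSpace S]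
    (ν μ : SignedMeasure S) {f : S → ℝ} (hf : IsBL f) :
    pairing (ν - μ) f = pairing ν f - pairing μ f := by
  have e1 := (ν - μ).toSignedMeasure_toJordanDecomposition
  have e2 := ν.toSignedMeasure_toJordanDecomposition
  have e3 := μ.toSignedMeasure_toJordanDecomposition
  unfold pairing
  set a := (ν - μ).toJordanDecomposition
  set b := ν.toJordanDecomposition
  set c := μ.toJordanDecomposition
  have key : a.posPart + (b.negPart + c.posPart) = a.negPart + (b.posPart + c.negPart) := by
    rw [← Measure.toSignedMeasure_eq_toSignedMeasure_iff]
    simp only [Measure.toSignedMeasure_add]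
    rw [← e2, ← e3] at e1
    unfold JordanDecomposition.toSignedMeasure at e1
    rw [sub_eq_iff_eq_add] at e1
    rw [e1]
    abel
  have h := congrArg (fun m => ∫ x, f x ∂m) key
  rw [integral_add_measure (aux_integrable _ hf) (aux_integrable _ hf),
    integral_add_measure (aux_integrable _ hf) (aux_integrable _ hf),
    integral_add_measure (aux_integrable _ hf) (aux_integrable _ hf),
    integral_add_measure (aux_integrable _ hf) (aux_integrable _ hf)] at h
  linarith

theorem tvNorm_eq {S : Type*} [MeasurableSpace S] (μ : SignedMeasure S) :
    tvNorm μ = μ.toJordanDecomposition.posPart.real Set.univ +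
      μ.toJordanDecomposition.negPart.real Set.univ := by
  unfold tvNorm SignedMeasure.totalVariation
  rw [Measure.add_apply, ENNReal.toReal_add (measure_ne_top _ _) (measure_ne_top _ _)]
  rfl

/-- unit ball -/
def B1 {S : Type*} [PseudoMetricSpace S] (f : S → ℝ) : Prop :=
  ∃ (C : ℝ) (K : NNReal), (∀ x, |f x| ≤ C) ∧ LipschitzWith K f ∧ C + (K : ℝ) ≤ 1

theorem B1.isBL {S : Type*} [PseudoMetricSpace S] {f : S → ℝ} (h : B1 f) : IsBL f := by
  obtain ⟨C, K, h1, h2, _⟩ := h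
  exact ⟨⟨C, h1⟩, K, h2⟩

theorem B1.abs_le {S : Type*} [PseudoMetricSpace S] {f : S → ℝ} (h : B1 f) (x : S) :
    |f x| ≤ 1 := by
  obtain ⟨C, K, h1, h2, h3⟩ := h
  have := h1 x
  have := K.coe_nonneg
  linarith

theorem B1.abs_sub_le {S : Type*} [PseudoMetricSpace S] {f : S → ℝ} (h : B1 f) (x y : S) :
    |f x - f y| ≤ dist x y := by
  obtain ⟨C, K, h1, h2, h3⟩ := h
  have h4 := h2.dist_le_mul x y
  rw [Real.dist_eq] at h4
  have h5 := (abs_nonneg _).trans (h1 x)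
  have : (K : ℝ) ≤ 1 := by linarith
  have := mul_le_mul_of_nonneg_right this (dist_nonneg (x := x) (y := y))
  linarith

theorem pairing_bound {S : Type*} [PseudoMetricSpace S] [MeasurableSpace S] [BorelSpace S]
    (ν : SignedMeasure S) {h : S → ℝ} (hh : IsBL h) {A : Set S} (hA : MeasurableSet A) (c b : ℝ)
    (h1 : ∀ x ∈ A, |h x| ≤ c + b) (h2 : ∀ x, x ∉ A → |h x| ≤ c) :
    |pairing ν h| ≤ c * tvNorm ν + b * (ν.toJordanDecomposition.posPart.real A +
      ν.toJordanDecomposition.negPart.real A) := by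
  rw [tvNorm_eq]
  unfold pairing
  set p := ν.toJordanDecomposition.posPart
  set n := ν.toJordanDecomposition.negPart
  have a1 := aux_int p (aux_integrable p hh) hA c b (fun x hx => (le_abs_self _).trans (h1 x hx))
    (fun x hx => (le_abs_self _).trans (h2 x hx))
  have a2 := aux_int n (aux_integrable n hh) hA c b (fun x hx => (le_abs_self _).trans (h1 x hx))
    (fun x hx => (le_abs_self _).trans (h2 x hx))
  have a3 := aux_int p (aux_integrable p hh).neg hA c b
    (fun x hx => (neg_le_abs _).trans (h1 x hx)) (fun x hx => (neg_le_abs _).trans (h2 x hx))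
  have a4 := aux_int n (aux_integrable n hh).neg hA c b
    (fun x hx => (neg_le_abs _).trans (h1 x hx)) (fun x hx => (neg_le_abs _).trans (h2 x hx))
  simp only [Pi.neg_apply, integral_neg] at a3 a4
  rw [abs_le]
  constructor <;> linarith

theorem bl_bdd {S : Type*} [PseudoMetricSpace S] [MeasurableSpace S] [BorelSpace S]
    (μ : SignedMeasure S) {f : S → ℝ} (hf : B1 f) : |pairing μ f| ≤ tvNorm μ := by
  have := pairing_bound μ hf.isBL MeasurableSet.empty 1 0 (by simp) (fun x _ => hf.abs_le x)
  simpa using this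

theorem le_blDual {S : Type*} [PseudoMetricSpace S] [MeasurableSpace S] [BorelSpace S]
    (μ : SignedMeasure S) {f : S → ℝ} (hf : B1 f) : |pairing μ f| ≤ blDualNorm μ := by
  refine le_csSup ⟨tvNorm μ, ?_⟩ ?_
  · rintro r ⟨g, C, K, h1, h2, h3, rfl⟩
    exact bl_bdd μ ⟨C, K, h1, h2, h3⟩
  · obtain ⟨C, K, h1, h2, h3⟩ := hf
    exact ⟨f, C, K, h1, h2, h3, rfl⟩

theorem blDual_le {S : Type*} [PseudoMetricSpace S] [MeasurableSpace S]
    (μ : SignedMeasure S) (c : ℝ) (h : ∀ f : S → ℝ, B1 f → |pairing μ f| ≤ c) :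
    blDualNorm μ ≤ c := by
  refine csSup_le ⟨_, (fun _ => 0), 0, 0, by simp, LipschitzWith.const 0, by simp, rfl⟩ ?_
  rintro r ⟨g, C, K, h1, h2, h3, rfl⟩
  exact h g ⟨C, K, h1, h2, h3⟩

/-- The localizing test function. -/
theorem exists_test {S : Type*} [MetricSpace S] [CompleteSpace S]
    [TopologicalSpace.SeparableSpace S] [MeasurableSpace S] [BorelSpace S]
    (μ : SignedMeasure S) (δ : ℝ) (hδ : 0 < δ) :
    ∃ (f : S → ℝ) (F U : Set S), IsBL f ∧ F.Finite ∧ MeasurableSet U ∧ (∀ x, |f x| ≤ 1) ∧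
      (∀ x, x ∉ U → f x = 0) ∧ (∀ x ∈ U, ∃ y ∈ F, dist x y < 2 * δ) ∧
      tvNorm μ - 4 * δ ≤ pairing μ f := by
  rw [tvNorm_eq]
  unfold pairing
  obtain ⟨A, hA, hpA, hnA⟩ := μ.toJordanDecomposition.mutuallySingular
  set p := μ.toJordanDecomposition.posPart
  set n := μ.toJordanDecomposition.negPart
  have hδ' : ENNReal.ofReal δ ≠ 0 := by simpa using hδ
  obtain ⟨K, hKA, hK, hKp⟩ := hA.compl.exists_isCompact_sdiff_lt (measure_ne_top p _) hδ'
  obtain ⟨L, hLA, hL, hLn⟩ := hA.exists_isCompact_sdiff_lt (measure_ne_top n _) hδ'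
  have hp : p.real Kᶜ ≤ δ := by
    refine ENNReal.toReal_le_of_le_ofReal hδ.le ?_
    calc p Kᶜ ≤ p (A ∪ Aᶜ \ K) := measure_mono (fun x hx => by
            by_cases h : x ∈ A
            · exact Or.inl h
            · exact Or.inr ⟨h, hx⟩)
      _ ≤ p A + p (Aᶜ \ K) := measure_union_le _ _
      _ ≤ _ := by rw [hpA, zero_add]; exact hKp.le
  have hn : n.real Lᶜ ≤ δ := by
    refine ENNReal.toReal_le_of_le_ofReal hδ.le ?_
    calc n Lᶜ ≤ n (Aᶜ ∪ A \ L) := measure_mono (fun x hx => by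
            by_cases h : x ∈ A
            · exact Or.inr ⟨h, hx⟩
            · exact Or.inl h)
      _ ≤ n Aᶜ + n (A \ L) := measure_union_le _ _
      _ ≤ _ := by rw [hnA, zero_add]; exact hLn.le
  have hdis : Disjoint K L := Set.disjoint_of_subset hKA hLA disjoint_compl_left
  obtain ⟨r0, hr0, hd0⟩ := hdis.exists_thickenings hK hL.isClosed
  set r := min r0 δ with hr
  have hrp : 0 < r := lt_min hr0 hδ
  have hd : Disjoint (Metric.thickening r K) (Metric.thickening r L) :=
    Set.disjoint_of_subset (Metric.thickening_mono (min_le_left _ _) _)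
      (Metric.thickening_mono (min_le_left _ _) _) hd0
  obtain ⟨F, -, hF, hcov⟩ := (hK.union hL).finite_cover_balls hδ
  set f : S → ℝ := fun x => (thickenedIndicator hrp K x : ℝ) - (thickenedIndicator hrp L x : ℝ)
    with hf
  have hk0 : ∀ x, (0:ℝ) ≤ thickenedIndicator hrp K x := fun x => NNReal.coe_nonneg _
  have hl0 : ∀ x, (0:ℝ) ≤ thickenedIndicator hrp L x := fun x => NNReal.coe_nonneg _
  have hk1 : ∀ x, (thickenedIndicator hrp K x : ℝ) ≤ 1 := fun x => by
    exact_mod_cast thickenedIndicator_le_one hrp K x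
  have hl1 : ∀ x, (thickenedIndicator hrp L x : ℝ) ≤ 1 := fun x => by
    exact_mod_cast thickenedIndicator_le_one hrp L x
  have hf1 : ∀ x, |f x| ≤ 1 := fun x => by
    rw [abs_le]
    have := hk0 x
    have := hk1 x
    have := hl0 x
    have := hl1 x
    constructor <;> simp only [hf] <;> linarith
  have hbl : IsBL f := by
    have q (E : Set S) : IsBL (fun x => (thickenedIndicator hrp E x : ℝ)) := by
      refine ⟨⟨1, fun x => ?_⟩, _, lipschitzWith_thickenedIndicator hrp E⟩
      rw [abs_of_nonneg (NNReal.coe_nonneg _)]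
      exact_mod_cast thickenedIndicator_le_one hrp E x
    exact (q K).sub' (q L)
  have hfK : ∀ x ∈ K, f x = 1 := fun x hx => by
    have h1 := thickenedIndicator_one hrp K hx
    have h2 := thickenedIndicator_zero hrp L
      (Set.disjoint_left.1 hd (Metric.self_subset_thickening hrp K hx))
    simp only [hf, h1, h2]; norm_num
  have hfL : ∀ x ∈ L, f x = -1 := fun x hx => by
    have h1 := thickenedIndicator_one hrp L hx
    have h2 := thickenedIndicator_zero hrp K
      (Set.disjoint_right.1 hd (Metric.self_subset_thickening hrp L hx))
    simp only [hf, h1, h2]; norm_num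
  refine ⟨f, F, Metric.thickening r (K ∪ L), hbl, hF, Metric.isOpen_thickening.measurableSet,
    hf1, ?_, ?_, ?_⟩
  · intro x hx
    have h1 := thickenedIndicator_zero hrp K (x := x)
      (fun h => hx (Metric.thickening_subset_of_subset _ Set.subset_union_left h))
    have h2 := thickenedIndicator_zero hrp L (x := x)
      (fun h => hx (Metric.thickening_subset_of_subset _ Set.subset_union_right h))
    simp only [hf, h1, h2]; norm_num
  · intro x hx
    obtain ⟨z, hz, hxz⟩ := Metric.mem_thickening_iff.1 hx
    obtain ⟨y, hy, hzy⟩ := Set.mem_iUnion₂.1 (hcov hz)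
    refine ⟨y, hy, ?_⟩
    have := dist_triangle x z y
    have h3 : r ≤ δ := min_le_right _ _
    rw [Metric.mem_ball] at hzy
    linarith
  · have a1 := aux_int p (aux_integrable p hbl).neg hK.measurableSet.compl (-1) 2
      (fun x _ => by have := (abs_le.1 (hf1 x)).1; simp only [Pi.neg_apply]; linarith)
      (fun x hx => by simp [hfK x (not_not.1 hx)])
    have a2 := aux_int n (aux_integrable n hbl) hL.measurableSet.compl (-1) 2
      (fun x _ => by have := (abs_le.1 (hf1 x)).2; linarith)
      (fun x hx => by simp [hfL x (not_not.1 hx)])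
    simp only [Pi.neg_apply, integral_neg] at a1
    linarith

theorem outside_small {S : Type*} [PseudoMetricSpace S] [MeasurableSpace S] [BorelSpace S]
    (ν : SignedMeasure S) {f : S → ℝ} (hf : IsBL f) {U : Set S} (hU : MeasurableSet U)
    (hf1 : ∀ x, |f x| ≤ 1) (hf0 : ∀ x, x ∉ U → f x = 0) :
    ν.toJordanDecomposition.posPart.real Uᶜ + ν.toJordanDecomposition.negPart.real Uᶜ ≤
      tvNorm ν - pairing ν f := by
  have := (le_abs_self _).trans (pairing_bound ν hf hU.compl 1 (-1)
    (fun x hx => by simp [hf0 x hx]) (fun x _ => hf1 x))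
  linarith

theorem key_lemma {S : Type*} [MetricSpace S] [CompleteSpace S]
    [TopologicalSpace.SeparableSpace S] [MeasurableSpace S] [BorelSpace S]
    (ρ : ℝ) (hρ : 0 < ρ) (μ : SignedMeasure S) (hμ : tvNorm μ = ρ) (ε : ℝ) (hε : 0 < ε) :
    ∃ (T : Set (S → ℝ)) (δ : ℝ), 0 < δ ∧ T.Finite ∧ (∀ g ∈ T, IsBL g) ∧
      ∀ ν : SignedMeasure S, tvNorm ν = ρ →
        (∀ g ∈ T, |pairing ν g - pairing μ g| < δ) → blDualNorm (ν - μ) < ε := by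
  obtain ⟨δ, hδ, hδε⟩ : ∃ δ : ℝ, 0 < δ ∧ δ * (21 + 10 * ρ) < ε := by
    refine ⟨ε / (2 * (21 + 10 * ρ)), by positivity, ?_⟩
    field_simp
    linarith
  obtain ⟨f, F, U, hf, hF, hU, hf1, hf0, hUF, hμf⟩ := exists_test μ δ hδ
  have : Fintype F := hF.fintype
  let Φ : (S → ℝ) → (F → ℝ) := fun g y => g y
  have htb : TotallyBounded (Φ '' {g | B1 g}) := by
    refine (isCompact_closedBall (0 : F → ℝ) 1).totallyBounded.subset ?_
    rintro _ ⟨g, hg, rfl⟩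
    rw [mem_closedBall_zero_iff, pi_norm_le_iff_of_nonneg zero_le_one]
    exact fun y => B1.abs_le hg y
  obtain ⟨t, hts, htf, hcov⟩ := Metric.finite_approx_of_totallyBounded htb δ hδ
  obtain ⟨T, hT1, hTf, rfl⟩ : ∃ T : Set (S → ℝ), T ⊆ {g | B1 g} ∧ T.Finite ∧ Φ '' T = t := by
    exact Set.exists_subset_image_finite_and (p := fun u => u = t).1 ⟨t, hts, htf, rfl⟩
  refine ⟨insert f T, δ, hδ, hTf.insert f, ?_, ?_⟩
  · rintro g (rfl | hg)
    · exact hf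
    · exact (hT1 hg).isBL
  intro ν hν hνT
  refine lt_of_le_of_lt (blDual_le _ (δ * (21 + 10 * ρ)) (fun g hg => ?_)) hδε
  obtain ⟨_, ⟨g', hg', rfl⟩, hgg⟩ := Set.mem_iUnion₂.1 (hcov ⟨g, hg, rfl⟩)
  have hg'1 : B1 g' := hT1 hg'
  have hνf := hνT f (Set.mem_insert _ _)
  have hνg := hνT g' (Set.mem_insert_of_mem _ hg')
  have hsub := hg.isBL.sub' hg'1.isBL
  have hin : ∀ x ∈ U, |g x - g' x| ≤ 5 * δ := by
    intro x hx
    obtain ⟨y, hy, hxy⟩ := hUF x hx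
    have b1 := hg.abs_sub_le x y
    have b2 := hg'1.abs_sub_le x y
    have b3 : |g y - g' y| < δ := by
      have := (dist_pi_lt_iff hδ).1 (Metric.mem_ball.1 hgg) ⟨y, hy⟩
      rwa [Real.dist_eq] at this
    rw [abs_le] at b1 b2 ⊢
    rw [abs_lt] at b3
    constructor <;> linarith
  have hout : ∀ x, |g x - g' x| ≤ 2 := fun x => by
    have b1 := hg.abs_le x
    have b2 := hg'1.abs_le x
    rw [abs_le] at b1 b2 ⊢
    constructor <;> linarith
  have main (m : SignedMeasure S) (hm : tvNorm m = ρ) (hmf : ρ - 5 * δ ≤ pairing m f) :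
      |pairing m g - pairing m g'| ≤ 5 * δ * ρ + 10 * δ := by
    have c1 := outside_small m hf hU hf1 hf0
    have c2 := pairing_bound m hsub hU.compl (5 * δ) 2
      (fun x _ => (hout x).trans (by linarith)) (fun x hx => hin x (not_not.1 hx))
    rw [pairing_sub_fun m hg.isBL hg'1.isBL, hm] at c2
    rw [hm] at c1
    linarith
  have m1 := main μ hμ (by linarith)
  have m2 := main ν hν (by rw [abs_lt] at hνf; linarith)
  rw [pairing_sub _ _ hg.isBL]
  rw [abs_le] at m1 m2 ⊢
  rw [abs_lt] at hνg
  constructor <;> nlinarith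

theorem blDual_self {S : Type*} [PseudoMetricSpace S] [MeasurableSpace S] [BorelSpace S]
    (μ : SignedMeasure S) : blDualNorm (μ - μ) ≤ 0 := by
  refine blDual_le _ _ (fun f hf => ?_)
  rw [pairing_sub _ _ hf.isBL]
  simp

theorem norm_le_weak (S : Type*) [PseudoMetricSpace S] [MeasurableSpace S] [BorelSpace S] :
    normTop S ≤ weakTop S := by
  unfold weakTop
  refine le_iInf fun ⟨f, hf⟩ => ?_
  rw [← continuous_iff_le_induced]
  letI := normTop S
  rw [continuous_iff_continuousAt]
  intro μ
  rw [ContinuousAt, Metric.tendsto_nhds]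
  intro ε hε
  obtain ⟨⟨C, hC⟩, K, hK⟩ := id hf
  set c : ℝ := |C| + K + 1 with hc
  have hc0 : 0 < c := by positivity
  have hB : B1 (fun x => c⁻¹ * f x) := by
    refine ⟨c⁻¹ * |C|, ‖c⁻¹‖₊ * K, fun x => ?_, ?_, ?_⟩
    · rw [abs_mul, abs_of_pos (inv_pos.2 hc0)]
      exact mul_le_mul_of_nonneg_left ((hC x).trans (le_abs_self _)) (inv_pos.2 hc0).le
    · refine LipschitzWith.of_dist_le_mul fun x y => ?_
      have := hK.dist_le_mul x y
      rw [Real.dist_eq] at this ⊢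
      rw [← mul_sub, abs_mul, NNReal.coe_mul, coe_nnnorm, Real.norm_eq_abs, mul_assoc]
      exact mul_le_mul_of_nonneg_left this (abs_nonneg _)
    · rw [NNReal.coe_mul, coe_nnnorm, Real.norm_eq_abs, abs_of_pos (inv_pos.2 hc0), ← mul_add,
        inv_mul_le_iff₀ hc0]
      linarith
  have hopen : IsOpen {ν : SignedMeasure S | blDualNorm (ν - μ) < ε / c} :=
    TopologicalSpace.isOpen_generateFrom_of_mem ⟨μ, ε / c, by positivity, rfl⟩
  filter_upwards [hopen.mem_nhds (show blDualNorm (μ - μ) < ε / c from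
    (blDual_self μ).trans_lt (by positivity))] with ν hν
  have h1 := (le_blDual (ν - μ) hB).trans_lt hν
  rw [pairing_mul, pairing_sub _ _ hf, abs_mul, abs_of_pos (inv_pos.2 hc0),
    inv_mul_lt_iff₀ hc0, mul_div_cancel₀ _ hc0.ne'] at h1
  exact h1

/-- On a total variation sphere `M = {μ : ‖μ‖_TV = ρ}` (`ρ > 0`) in the space of finite signed
Borel measures on a complete separable metric space, the relative `σ(M(S), BL(S))`-weak topology
coincides with the relative `‖·‖*_BL`-norm topology. -/
theorem coincidence_of_topologies_on_tv_sphere {S : Type*} [MetricSpace S] [CompleteSpace S]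
    [TopologicalSpace.SeparableSpace S] [MeasurableSpace S] [BorelSpace S]
    (ρ : ℝ) (hρ : 0 < ρ) (M : Set (SignedMeasure S))
    (hM : M = {μ : SignedMeasure S | tvNorm μ = ρ}) :
    TopologicalSpace.induced ((↑) : M → SignedMeasure S) (weakTop S) =
      TopologicalSpace.induced ((↑) : M → SignedMeasure S) (normTop S) := by
  refine le_antisymm ?_ (induced_mono (norm_le_weak S))
  unfold normTop
  rw [induced_generateFrom_eq]
  refine le_generateFrom ?_
  rintro _ ⟨_, ⟨μ₀, ε, hε, rfl⟩, rfl⟩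
  letI := TopologicalSpace.induced ((↑) : M → SignedMeasure S) (weakTop S)
  rw [isOpen_iff_mem_nhds]
  rintro ⟨μ, hμM⟩ hμ
  have hμ' : blDualNorm (μ - μ₀) < ε := hμ
  have hμρ : tvNorm μ = ρ := by rw [hM] at hμM; exact hμM
  obtain ⟨T, δ, hδ, hT, hTB, hkey⟩ := key_lemma ρ hρ μ hμρ (ε - blDualNorm (μ - μ₀)) (by linarith)
  have hcont : ∀ g ∈ T, ∀ᶠ ν : M in 𝓝 ⟨μ, hμM⟩, |pairing (ν : SignedMeasure S) g - pairing μ g| < δ := by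
    intro g hg
    have hc : Continuous (fun ν : M => pairing (ν : SignedMeasure S) g) := by
      rw [continuous_iff_le_induced]
      have h1 : weakTop S ≤ TopologicalSpace.induced (fun μ : SignedMeasure S => pairing μ g)
          inferInstance := iInf_le (fun f : {g : S → ℝ // IsBL g} =>
            TopologicalSpace.induced (fun μ : SignedMeasure S => pairing μ f.1) inferInstance)
            ⟨g, hTB g hg⟩
      have h2 := induced_mono (g := ((↑) : M → SignedMeasure S)) h1
      rw [induced_compose] at h2
      exact h2
    exact Metric.tendsto_nhds.1 (hc.tendsto ⟨μ, hμM⟩) δ hδ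
  filter_upwards [(Filter.eventually_all_finite hT).2 hcont] with ν hν
  have hνρ : tvNorm (ν : SignedMeasure S) = ρ := by
    exact hM.subset ν.2
  have h3 := hkey ν hνρ hν
  have h4 : blDualNorm ((ν : SignedMeasure S) - μ₀) ≤
      blDualNorm ((ν : SignedMeasure S) - μ) + blDualNorm (μ - μ₀) := by
    refine blDual_le _ _ fun f hf => ?_
    have k1 := le_blDual ((ν : SignedMeasure S) - μ) hf
    have k2 := le_blDual (μ - μ₀) hf
    rw [pairing_sub _ _ hf.isBL] at k1 k2 ⊢
    exact (abs_sub_le _ _ _).trans (add_le_add k1 k2)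
  show blDualNorm ((ν : SignedMeasure S) - μ₀) < ε
  linarith
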